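/- The piecewise density P (equal to P₁ on [0,a], P₂ on [a,√2·a], P₃ on [√2·a,√3·a]) is continuously differentiable on the open interval (0, √3·a): in particular the one-sided derivatives match at the breakpoints, i.e. the left derivative of P₁ at l = a equals the right derivative of P₂ at l = a, and the left derivative of P₂ at l = √2·a equals the right derivative of P₃ at l = √2·a. -/

import Mathlib

open MeasureTheory Real Set

/-- The density of separations on the range `0 ≤ l ≤ a`. -/
noncomputable def P₁ (a l : ℝ) : ℝ :=
  l ^ 2 * (4 * π * a ^ 3 - 6 * π * a ^ 2 * l + 8 * a * l ^ 2 - l ^ 3) / a ^ 6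

/-- The density of separations on the range `a ≤ l ≤ √2·a`. -/
noncomputable def P₂ (a l : ℝ) : ℝ :=
  l / a ^ 6 *
    (2 * l ^ 4 + 6 * a ^ 2 * l ^ 2 - a ^ 4 - 2 * π * a ^ 3 * (4 * l - 3 * a)
      - 8 * a * (2 * l ^ 2 + a ^ 2) * Real.sqrt (l ^ 2 - a ^ 2)
      + 24 * a ^ 2 * l ^ 2 * Real.arccos (a / l))

/-- The density of separations on the range `√2·a ≤ l ≤ √3·a`. -/
noncomputable def P₃ (a l : ℝ) : ℝ :=
  l / a ^ 6 *
    (8 * a * (l ^ 2 + a ^ 2) * Real.sqrt (l ^ 2 - 2 * a ^ 2)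
      - (l ^ 2 + a ^ 2) * (l ^ 2 + 5 * a ^ 2)
      + 2 * π * a ^ 2 * (3 * l ^ 2 - 4 * a * l + 3 * a ^ 2)
      + 24 * a ^ 3 * l * Real.arccos (a ^ 2 / (l ^ 2 - a ^ 2))
      - 24 * a ^ 2 * (l ^ 2 + a ^ 2) * Real.arccos (a / Real.sqrt (l ^ 2 - a ^ 2)))

/-- The piecewise probability density of separations: `P₁` on `[0,a]`,
`P₂` on `[a, √2·a]`, `P₃` on `[√2·a, √3·a]`. -/
noncomputable def P (a l : ℝ) : ℝ :=
  if l ≤ a then P₁ a l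
  else if l ≤ Real.sqrt 2 * a then P₂ a l
  else P₃ a l

noncomputable def D₁ (a l : ℝ) : ℝ :=
  (8 * π * a ^ 3 * l - 18 * π * a ^ 2 * l ^ 2 + 32 * a * l ^ 3 - 5 * l ^ 4) / a ^ 6

noncomputable def D₂ (a l : ℝ) : ℝ :=
  (10 * l ^ 4 + 18 * a ^ 2 * l ^ 2 - a ^ 4 - 2 * π * a ^ 3 * (8 * l - 3 * a)
    - 8 * a * (8 * l ^ 2 + a ^ 2) * Real.sqrt (l ^ 2 - a ^ 2)
    + 72 * a ^ 2 * l ^ 2 * Real.arccos (a / l)) / a ^ 6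

noncomputable def D₃ (a l : ℝ) : ℝ :=
  (8 * a * (4 * l ^ 2 + a ^ 2) * Real.sqrt (l ^ 2 - 2 * a ^ 2)
    - (5 * l ^ 4 + 18 * a ^ 2 * l ^ 2 + 5 * a ^ 4)
    + 2 * π * a ^ 2 * (9 * l ^ 2 - 8 * a * l + 3 * a ^ 2)
    + 48 * a ^ 3 * l * Real.arccos (a ^ 2 / (l ^ 2 - a ^ 2))
    - 24 * a ^ 2 * (3 * l ^ 2 + a ^ 2) * Real.arccos (a / Real.sqrt (l ^ 2 - a ^ 2))) / a ^ 6

lemma hasDeriv_P₁ (a l : ℝ) : HasDerivAt (P₁ a) (D₁ a l) l := by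
  have h := ((hasDerivAt_id l).pow 2 |>.mul
    ((((hasDerivAt_id l).const_mul (6 * π * a ^ 2)).const_sub (4 * π * a ^ 3)).add
      (((hasDerivAt_id l).pow 2).const_mul (8 * a)) |>.sub ((hasDerivAt_id l).pow 3))).div_const (a ^ 6)
  refine (h.congr_deriv ?_).congr_of_eventuallyEq ?_
  · simp only [D₁, Pi.pow_apply, Pi.add_apply, Pi.sub_apply, id]
    push_cast
    ring
  · filter_upwards with x
    simp [P₁]

lemma hasDeriv_sqrt (c l : ℝ) (h : 0 < l ^ 2 - c) :
    HasDerivAt (fun x : ℝ => Real.sqrt (x ^ 2 - c)) (l / Real.sqrt (l ^ 2 - c)) l := by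
  have h1 : HasDerivAt (fun x : ℝ => x ^ 2 - c) (2 * l) l := by
    simpa using (hasDerivAt_pow 2 l).sub_const c
  refine (h1.sqrt h.ne').congr_deriv ?_
  have := Real.sqrt_pos.2 h
  field_simp

lemma hasDeriv_arccos_div (c l : ℝ) (u : ℝ → ℝ) (u' r : ℝ) (hc : 0 < c) (hu : HasDerivAt u u' l)
    (h : c < u l) (hr : 0 < r) (hr2 : r ^ 2 = u l ^ 2 - c ^ 2) :
    HasDerivAt (fun x : ℝ => Real.arccos (c / u x)) (c * u' / (u l * r)) l := by
  have hp : 0 < u l := hc.trans h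
  have h1 : HasDerivAt (fun x => c / u x) (-(c * u') / (u l) ^ 2) l := by
    refine ((hasDerivAt_const l c).div hu hp.ne').congr_deriv ?_
    ring
  have hlt : c / u l < 1 := (div_lt_one hp).2 h
  have hpos : 0 < c / u l := by positivity
  have h2 := (Real.hasDerivAt_arccos (by linarith : c / u l ≠ -1) hlt.ne).comp l h1
  refine h2.congr_deriv ?_
  have : Real.sqrt (1 - (c / u l) ^ 2) = r / u l := by
    rw [Real.sqrt_eq_iff_mul_self_eq_of_pos (by positivity)]
    field_simp
    linarith
  rw [this]
  field_simp

lemma hasDeriv_P₂ (a l : ℝ) (ha : 0 < a) (hl : a < l) : HasDerivAt (P₂ a) (D₂ a l) l := by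
  have hl0 : 0 < l := ha.trans hl
  have hs : 0 < l ^ 2 - a ^ 2 := by nlinarith
  have hsq := Real.sqrt_pos.2 hs
  have hss := Real.sq_sqrt hs.le
  have e1 := hasDeriv_sqrt (a ^ 2) l hs
  have e2 := hasDeriv_arccos_div a l id 1 _ ha (hasDerivAt_id l) hl hsq hss
  have hx := hasDerivAt_id l
  have h := (hx.div_const (a ^ 6)).mul
    (((((((hx.pow 4).const_mul 2).add ((hx.pow 2).const_mul (6 * a ^ 2))).sub_const (a ^ 4)).sub
      (((hx.const_mul 4).sub_const (3 * a)).const_mul (2 * π * a ^ 3))).sub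
      (((((hx.pow 2).const_mul 2).add_const (a ^ 2)).const_mul (8 * a)).mul e1)).add
      (((hx.pow 2).const_mul (24 * a ^ 2)).mul e2))
  refine (h.congr_deriv ?_).congr_of_eventuallyEq ?_
  · simp only [D₂, Pi.pow_apply, Pi.add_apply, Pi.sub_apply, Pi.mul_apply, id]
    push_cast
    generalize Real.arccos (a / l) = A
    generalize Real.sqrt (l ^ 2 - a ^ 2) = s at *
    field_simp
    have : l ^ 2 = s ^ 2 + a ^ 2 := by linarith
    ring_nf
    linear_combination (-16 * a * l ^ 2) * this
  · filter_upwards with x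
    simp [P₂]

lemma hasDeriv_P₃ (a l : ℝ) (ha : 0 < a) (hl0 : 0 < l) (hl : 0 < l ^ 2 - 2 * a ^ 2) :
    HasDerivAt (P₃ a) (D₃ a l) l := by
  have hs : 0 < l ^ 2 - a ^ 2 := by nlinarith
  have hsq := Real.sqrt_pos.2 hs
  have hss := Real.sq_sqrt hs.le
  have htq := Real.sqrt_pos.2 hl
  have htt := Real.sq_sqrt hl.le
  have e1 := hasDeriv_sqrt (2 * a ^ 2) l hl
  have e2 := hasDeriv_sqrt (a ^ 2) l hs
  have h1 : HasDerivAt (fun x : ℝ => x ^ 2 - a ^ 2) (2 * l) l := by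
    simpa using (hasDerivAt_pow 2 l).sub_const (a ^ 2)
  have e3 := hasDeriv_arccos_div (a ^ 2) l _ _ (l * Real.sqrt (l ^ 2 - 2 * a ^ 2))
    (by positivity) h1 (by linarith) (by positivity) (by rw [mul_pow, htt]; ring)
  have e4 := hasDeriv_arccos_div a l _ _ (Real.sqrt (l ^ 2 - 2 * a ^ 2))
    ha e2 (by apply Real.lt_sqrt_of_sq_lt; linarith) (by positivity) (by rw [htt, hss]; ring)
  have hx := hasDerivAt_id l
  have h := (hx.div_const (a ^ 6)).mul
    ((((((((hx.pow 2).add_const (a ^ 2)).const_mul (8 * a)).mul e1).sub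
      (((hx.pow 2).add_const (a ^ 2)).mul ((hx.pow 2).add_const (5 * a ^ 2)))).add
      (((((hx.pow 2).const_mul 3).sub (hx.const_mul (4 * a))).add_const (3 * a ^ 2)).const_mul
        (2 * π * a ^ 2))).add
      ((hx.const_mul (24 * a ^ 3)).mul e3)).sub
      ((((hx.pow 2).add_const (a ^ 2)).const_mul (24 * a ^ 2)).mul e4))
  refine (h.congr_deriv ?_).congr_of_eventuallyEq ?_
  · simp only [D₃, Pi.pow_apply, Pi.add_apply, Pi.sub_apply, Pi.mul_apply, id]
    push_cast
    generalize Real.arccos (a ^ 2 / (l ^ 2 - a ^ 2)) = A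
    generalize Real.arccos (a / Real.sqrt (l ^ 2 - a ^ 2)) = B
    generalize Real.sqrt (l ^ 2 - a ^ 2) = s at *
    generalize Real.sqrt (l ^ 2 - 2 * a ^ 2) = t at *
    rw [← hss]
    have q1 : a * (l / s) / (s * t) = a * l / (s ^ 2 * t) := by field_simp
    have q2 : a ^ 2 * (2 * l) / (s ^ 2 * (l * t)) = 2 * a ^ 2 / (s ^ 2 * t) := by field_simp
    rw [q1, q2]
    have key : 8 * a * (l ^ 2 + a ^ 2) * (l / t) + 24 * a ^ 3 * l * (2 * a ^ 2 / (s ^ 2 * t))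
        - 24 * a ^ 2 * (l ^ 2 + a ^ 2) * (a * l / (s ^ 2 * t)) = 8 * a * l * t := by
      field_simp
      rw [hss, htt]
      ring
    field_simp at key ⊢
    linear_combination l ^ 2 * a * key
  · filter_upwards with x
    simp [P₃]

lemma sqrt2_facts (a : ℝ) (ha : 0 < a) :
    a < Real.sqrt 2 * a ∧ (Real.sqrt 2 * a) ^ 2 = 2 * a ^ 2 := by
  have h1 : (1 : ℝ) < Real.sqrt 2 := by
    apply Real.lt_sqrt_of_sq_lt; norm_num
  refine ⟨by nlinarith, ?_⟩
  rw [mul_pow, Real.sq_sqrt (by norm_num)]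

lemma cont_P₂ (a l : ℝ) (hl : l ≠ 0) : ContinuousAt (P₂ a) l := by
  unfold P₂; fun_prop (disch := assumption)

lemma cont_D₂ (a l : ℝ) (hl : l ≠ 0) : ContinuousAt (D₂ a) l := by
  unfold D₂; fun_prop (disch := assumption)

lemma cont_P₃ (a l : ℝ) (hl : 0 < l ^ 2 - a ^ 2) : ContinuousAt (P₃ a) l := by
  have h1 := hl.ne'
  have h2 := (Real.sqrt_pos.2 hl).ne'
  unfold P₃; fun_prop (disch := assumption)

lemma cont_D₃ (a l : ℝ) (hl : 0 < l ^ 2 - a ^ 2) : ContinuousAt (D₃ a) l := by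
  have h1 := hl.ne'
  have h2 := (Real.sqrt_pos.2 hl).ne'
  unfold D₃; fun_prop (disch := assumption)

lemma right_deriv (f g : ℝ → ℝ) (c : ℝ) (h : ∀ x, c < x → HasDerivAt f (g x) x)
    (hf : ContinuousAt f c) (hg : ContinuousAt g c) : HasDerivWithinAt f (g c) (Ici c) c := by
  refine hasDerivWithinAt_Ici_of_tendsto_deriv (s := Ioi c)
    (fun x hx => (h x hx).differentiableAt.differentiableWithinAt) hf.continuousWithinAt
    self_mem_nhdsWithin ?_
  refine (hg.tendsto.mono_left nhdsWithin_le_nhds).congr' ?_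
  filter_upwards [self_mem_nhdsWithin] with x hx
  exact (h x hx).deriv.symm

lemma vals_a (a : ℝ) (ha : 0 < a) : P₁ a a = P₂ a a ∧ D₁ a a = D₂ a a := by
  constructor
  · simp only [P₁, P₂, div_self ha.ne', sub_self, Real.sqrt_zero, Real.arccos_one]
    ring
  · simp only [D₁, D₂, div_self ha.ne', sub_self, Real.sqrt_zero, Real.arccos_one]
    ring

lemma arccos_val : Real.arccos (1 / Real.sqrt 2) = π / 4 := by
  have : 1 / Real.sqrt 2 = Real.cos (π / 4) := by
    rw [Real.cos_pi_div_four]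
    have h0 : Real.sqrt 2 ≠ 0 := by positivity
    field_simp
    norm_num
  rw [this, Real.arccos_cos] <;> linarith [Real.pi_pos]

lemma vals_b (a : ℝ) (ha : 0 < a) : P₂ a (√2 * a) = P₃ a (√2 * a) ∧
    D₂ a (√2 * a) = D₃ a (√2 * a) := by
  have h2 := (sqrt2_facts a ha).2
  have e1 : (√2 * a) ^ 2 - a ^ 2 = a ^ 2 := by rw [h2]; ring
  have e2 : (√2 * a) ^ 2 - 2 * a ^ 2 = 0 := by rw [h2]; ring
  have e3 : a / (√2 * a) = 1 / √2 := by
    field_simp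
  have e4 : a ^ 2 / a ^ 2 = 1 := div_self (by positivity)
  have h4 : (√2 * a) ^ 4 = 4 * a ^ 4 := by
    rw [show (√2 * a) ^ 4 = ((√2 * a) ^ 2) ^ 2 by ring, h2]; ring
  constructor
  · simp only [P₂, P₃, e1, e2, e3]
    simp only [e4, arccos_val, Real.sqrt_sq ha.le, div_self ha.ne',
      Real.sqrt_zero, Real.arccos_one, h2, h4]
    ring
  · simp only [D₂, D₃, e1, e2, e3]
    simp only [e4, arccos_val, Real.sqrt_sq ha.le, div_self ha.ne',
      Real.sqrt_zero, Real.arccos_one, h2, h4]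
    ring

noncomputable def G (a l : ℝ) : ℝ :=
  if l ≤ a then D₁ a l
  else if l ≤ Real.sqrt 2 * a then D₂ a (max l a)
  else D₃ a (max l (Real.sqrt 2 * a))

lemma cont_G (a : ℝ) (ha : 0 < a) : Continuous (G a) := by
  obtain ⟨h1, h2⟩ := sqrt2_facts a ha
  have c2 : Continuous fun l => D₂ a (max l a) := by
    rw [continuous_iff_continuousAt]
    intro l
    refine ContinuousAt.comp (f := fun l => max l a) (cont_D₂ a _ ?_) (by fun_prop)
    exact (lt_of_lt_of_le ha (le_max_right l a)).ne'
  have c3 : Continuous fun l => D₃ a (max l (√2 * a)) := by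
    rw [continuous_iff_continuousAt]
    intro l
    refine ContinuousAt.comp (f := fun l => max l (√2 * a)) (cont_D₃ a _ ?_) (by fun_prop)
    have := le_max_right l (√2 * a)
    nlinarith
  unfold G
  refine Continuous.if_le (by unfold D₁; fun_prop) ?_ continuous_id continuous_const ?_
  · refine Continuous.if_le c2 c3 continuous_id continuous_const ?_
    intro x hx
    subst hx
    simp only [max_self]
    rw [max_eq_left h1.le]
    exact (vals_b a ha).2
  · intro x hx
    subst hx
    rw [if_pos h1.le, max_self]
    exact (vals_a _ ha).2

lemma rd₂ (a : ℝ) (ha : 0 < a) : HasDerivWithinAt (P₂ a) (D₂ a a) (Ici a) a :=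
  right_deriv _ _ _ (fun x hx => hasDeriv_P₂ a x ha hx) (cont_P₂ a a ha.ne') (cont_D₂ a a ha.ne')

lemma rd₃ (a : ℝ) (ha : 0 < a) :
    HasDerivWithinAt (P₃ a) (D₃ a (√2 * a)) (Ici (√2 * a)) (√2 * a) := by
  obtain ⟨h1, h2⟩ := sqrt2_facts a ha
  refine right_deriv _ _ _ (fun x hx => hasDeriv_P₃ a x ha (by linarith) (by nlinarith))
    (cont_P₃ a _ (by nlinarith)) (cont_D₃ a _ (by nlinarith))

lemma hasDeriv_P (a l : ℝ) (ha : 0 < a) : HasDerivAt (P a) (G a l) l := by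
  obtain ⟨h1, h2⟩ := sqrt2_facts a ha
  rcases lt_trichotomy l a with h | h | h
  · have : G a l = D₁ a l := by simp [G, h.le]
    rw [this]
    refine (hasDeriv_P₁ a l).congr_of_eventuallyEq ?_
    filter_upwards [Iio_mem_nhds h] with x hx
    simp [P, le_of_lt (mem_Iio.1 hx)]
  · subst h
    have : G l l = D₁ l l := by simp [G]
    rw [this, ← hasDerivWithinAt_univ, ← Iic_union_Ici (a := l)]
    refine HasDerivWithinAt.union ?_ ?_
    · refine (hasDeriv_P₁ l l).hasDerivWithinAt.congr (fun x hx => ?_) (by simp [P])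
      simp [P, mem_Iic.1 hx]
    · rw [(vals_a l ha).2]
      refine (rd₂ l ha).congr_of_eventuallyEq ?_ (by simp [P, (vals_a l ha).1])
      filter_upwards [self_mem_nhdsWithin, mem_nhdsWithin_of_mem_nhds (Iio_mem_nhds h1)]
        with x hx hx'
      rcases eq_or_lt_of_le (mem_Ici.1 hx) with e | e
      · subst e; simp [P, (vals_a l ha).1]
      · simp [P, not_le.2 e, le_of_lt (mem_Iio.1 hx')]
  rcases lt_trichotomy l (√2 * a) with h' | h' | h'
  · have : G a l = D₂ a l := by simp [G, not_le.2 h, h'.le, max_eq_left h.le]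
    rw [this]
    refine (hasDeriv_P₂ a l ha h).congr_of_eventuallyEq ?_
    filter_upwards [Iio_mem_nhds h', Ioi_mem_nhds h] with x hx hx'
    simp [P, le_of_lt (mem_Iio.1 hx), not_le.2 (mem_Ioi.1 hx')]
  · have : G a l = D₂ a l := by simp [G, not_le.2 h, h'.le, max_eq_left h.le]
    rw [this, ← hasDerivWithinAt_univ, ← Iic_union_Ici (a := l)]
    have hP : P a l = P₂ a l := by simp [P, not_le.2 h, h'.le]
    refine HasDerivWithinAt.union ?_ ?_
    · refine (hasDeriv_P₂ a l ha h).hasDerivWithinAt.congr_of_eventuallyEq ?_ hP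
      filter_upwards [self_mem_nhdsWithin, mem_nhdsWithin_of_mem_nhds (Ioi_mem_nhds h)]
        with x hx hx'
      simp [P, not_le.2 (mem_Ioi.1 hx'), (mem_Iic.1 hx).trans h'.le]
    · have hv := vals_b a ha
      have hr := rd₃ a ha
      rw [← h'] at hv hr
      rw [hv.2]
      refine hr.congr (fun x hx => ?_) (hP.trans hv.1)
      rcases eq_or_lt_of_le (mem_Ici.1 hx) with e | e
      · subst e; exact hP.trans hv.1
      · simp [P, not_le.2 (h.trans e), not_le.2 (h' ▸ e)]
  · have : G a l = D₃ a l := by simp [G, not_le.2 h, not_le.2 h', max_eq_left h'.le]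
    rw [this]
    refine (hasDeriv_P₃ a l ha (ha.trans h) (by nlinarith)).congr_of_eventuallyEq ?_
    filter_upwards [Ioi_mem_nhds h', Ioi_mem_nhds h] with x hx hx'
    simp [P, not_le.2 (mem_Ioi.1 hx), not_le.2 (mem_Ioi.1 hx')]

theorem density_contDiff (a : ℝ) (ha : 0 < a) :
    ContDiffOn ℝ 1 (P a) (Set.Ioo 0 (Real.sqrt 3 * a)) ∧
    derivWithin (P₁ a) (Set.Iic a) a = derivWithin (P₂ a) (Set.Ici a) a ∧
    derivWithin (P₂ a) (Set.Iic (Real.sqrt 2 * a)) (Real.sqrt 2 * a) =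
      derivWithin (P₃ a) (Set.Ici (Real.sqrt 2 * a)) (Real.sqrt 2 * a) := by
  refine ⟨ContDiff.contDiffOn ?_, ?_, ?_⟩
  · rw [contDiff_one_iff_deriv]
    refine ⟨fun l => (hasDeriv_P a l ha).differentiableAt, ?_⟩
    rw [show deriv (P a) = G a from funext fun l => (hasDeriv_P a l ha).deriv]
    exact cont_G a ha
  · rw [(hasDeriv_P₁ a a).hasDerivWithinAt.derivWithin (uniqueDiffOn_Iic a a self_mem_Iic),
      (rd₂ a ha).derivWithin (uniqueDiffOn_Ici a a self_mem_Ici)]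
    exact (vals_a a ha).2
  · rw [(hasDeriv_P₂ a _ ha (sqrt2_facts a ha).1).hasDerivWithinAt.derivWithin
        (uniqueDiffOn_Iic _ _ self_mem_Iic),
      (rd₃ a ha).derivWithin (uniqueDiffOn_Ici _ _ self_mem_Ici)]
    exact (vals_b a ha).2
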